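/- Let n ≡ 1 (mod 8) be a positive integer that is not divisible by 4 and not of the form 4^e(8m - 1). Then there exist integers a, b, c with n = a² + b² + c² and 4 ∣ c. -/

import Mathlib

open MeasureTheory Matrix

lemma mink {n : ℕ} (T : Matrix (Fin n) (Fin n) ℝ) (hT : T.det ≠ 0) (R : ℝ)
    (hR : 0 < R)
    (hv : 2 ^ n * ENNReal.ofReal |T.det| < volume (Metric.ball (0 : EuclideanSpace ℝ (Fin n)) R)) :
    ∃ z : Fin n → ℤ, z ≠ 0 ∧ ∑ i, ((T *ᵥ (fun j => (z j : ℝ))) i) ^ 2 < R ^ 2 := by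
  classical
  set B : Set (Fin n → ℝ) := {x | ∑ i, (x i) ^ 2 < R ^ 2} with hB
  have hBall : B = (WithLp.toLp 2) ⁻¹' (Metric.ball (0 : EuclideanSpace ℝ (Fin n)) R) := by
    ext x
    simp only [hB, Set.mem_ofPred_eq, Set.mem_preimage, Metric.mem_ball, dist_zero_right,
      EuclideanSpace.norm_eq, Real.norm_eq_abs, sq_abs]
    rw [Real.sqrt_lt' hR]
  have hBvol : volume B = volume (Metric.ball (0 : EuclideanSpace ℝ (Fin n)) R) := by
    rw [hBall]
    exact (PiLp.volume_preserving_toLp (Fin n)).measure_preimage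
      Metric.isOpen_ball.measurableSet.nullMeasurableSet
  have hBconv : Convex ℝ B := by
    rw [hBall]
    exact (convex_ball (0 : EuclideanSpace ℝ (Fin n)) R).linear_preimage
      ((WithLp.linearEquiv 2 ℝ (Fin n → ℝ)).symm.toLinearMap)
  set f : (Fin n → ℝ) →ₗ[ℝ] (Fin n → ℝ) := Matrix.toLin' T with hf
  have hfd : LinearMap.det f = T.det := by simp [hf]
  set s := f ⁻¹' B with hs
  have hsvol : volume s = ENNReal.ofReal |(T.det)⁻¹| * volume B := by
    rw [hs, Measure.addHaar_preimage_linearMap volume (by rw [hfd]; exact hT), hfd]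
  set b := Pi.basisFun ℝ (Fin n)
  have fund := ZSpan.isAddFundamentalDomain' b (volume : Measure (Fin n → ℝ))
  have : Countable (Submodule.span ℤ (Set.range b)).toAddSubgroup := by
    change Countable (Submodule.span ℤ (Set.range b))
    infer_instance
  have hmain : _ := exists_ne_zero_mem_lattice_of_measure_mul_two_pow_lt_measure
    (s := s) fund
  suffices hsuff : _ ∧ _ ∧ _ by
    obtain ⟨x, hx0, hxs⟩ := hmain hsuff.1 hsuff.2.1 hsuff.2.2
    have hx : (x : Fin n → ℝ) ∈ Submodule.span ℤ (Set.range b) := x.2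
    replace hx := (b.mem_span_iff_repr_mem ℤ _).mp hx
    choose z hz using hx
    have hxz : (x : Fin n → ℝ) = fun j => (z j : ℝ) := by
      ext j
      have := hz j
      simp [b] at this
      exact this.symm
    refine ⟨z, ?_, ?_⟩
    · rintro rfl
      apply hx0
      ext j
      rw [hxz]; simp
    · have : f x ∈ B := hxs
      rw [hxz] at this
      simpa [hB, hf] using this
  refine ⟨?_, ?_, ?_⟩
  · intro x hx
    simp only [hs, Set.mem_preimage, map_neg, hB, Set.mem_ofPred_eq, Pi.neg_apply, neg_sq] at hx ⊢
    exact hx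
  · exact hBconv.linear_preimage f
  · rw [ZSpan.volume_fundamentalDomain, hsvol, hBvol]
    have h1 : (Matrix.of b).det = 1 := by
      have : Matrix.of b = (1 : Matrix (Fin n) (Fin n) ℝ) := by
        ext i j; simp [b, Matrix.one_apply, Pi.single_apply, eq_comm]
      rw [this, det_one]
    rw [h1]
    simp only [abs_one, ENNReal.ofReal_one, one_mul, Module.finrank_fin_fun]
    rw [abs_inv, ENNReal.ofReal_inv_of_pos (abs_pos.2 hT), mul_comm, ← div_eq_mul_inv]
    rw [ENNReal.lt_div_iff_mul_lt]
    · exact hv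
    · left; simpa using hT
    · left; simp

lemma mink3 (T : Matrix (Fin 3) (Fin 3) ℝ) (hT : T.det ≠ 0) (h2 : T.det ^ 2 ≤ 2) :
    ∃ z : Fin 3 → ℤ, z ≠ 0 ∧ ∑ i, ((T *ᵥ (fun j => (z j : ℝ))) i) ^ 2 < 2 := by
  have hs : (0:ℝ) < √2 := by positivity
  have hs2 : √2 ^ 2 = (2:ℝ) := Real.sq_sqrt (by norm_num)
  have hd : |T.det| ≤ √2 := Real.abs_le_sqrt h2
  suffices hsuff : _ by
    obtain ⟨z, hz, h⟩ := mink T hT √2 hs hsuff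
    exact ⟨z, hz, by rwa [hs2] at h⟩
  rw [EuclideanSpace.volume_ball_fin_three]
  have : (2:ENNReal) ^ 3 = ENNReal.ofReal 8 := by norm_num
  rw [this, ← ENNReal.ofReal_mul (by norm_num), ← ENNReal.ofReal_pow hs.le,
    ← ENNReal.ofReal_mul (by positivity)]
  apply (ENNReal.ofReal_lt_ofReal_iff (by positivity)).2
  have hpi := Real.pi_gt_three
  have h3 : √2 ^ 3 = (2:ℝ) * √2 := by rw [pow_succ, hs2]
  rw [h3]
  nlinarith [mul_pos hs (sub_pos.2 hpi)]

lemma mink4 (T : Matrix (Fin 4) (Fin 4) ℝ) (p : ℝ) (hp : 0 < p) (hT : T.det = p ^ 2) :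
    ∃ z : Fin 4 → ℤ, z ≠ 0 ∧ ∑ i, ((T *ᵥ (fun j => (z j : ℝ))) i) ^ 2 < 2 * p := by
  have hs : (0:ℝ) < √(2 * p) := by positivity
  have hs2 : √(2 * p) ^ 2 = 2 * p := Real.sq_sqrt (by positivity)
  suffices hsuff : _ by
    obtain ⟨z, hz, h⟩ := mink T (by rw [hT]; positivity) √(2 * p) hs hsuff
    exact ⟨z, hz, by rwa [hs2] at h⟩
  rw [InnerProductSpace.volume_ball_of_dim_even (k := 2) (by simp), hT]
  have : (2:ENNReal) ^ 4 = ENNReal.ofReal 16 := by norm_num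
  simp only [finrank_euclideanSpace, Fintype.card_fin]
  rw [this, ← ENNReal.ofReal_mul (by norm_num), ← ENNReal.ofReal_pow hs.le,
    ← ENNReal.ofReal_mul (by positivity)]
  apply (ENNReal.ofReal_lt_ofReal_iff (by positivity)).2
  have hpi := Real.pi_gt_three
  have h3 : √(2 * p) ^ 4 = (2 * p) ^ 2 := by
    have h5 : √(2 * p) ^ 4 = (√(2 * p) ^ 2) ^ 2 := by ring
    rw [h5, hs2]
  rw [h3, abs_of_pos (by positivity)]
  norm_num [Nat.factorial]
  nlinarith [mul_pos (pow_pos hp 2) (show 0 < Real.pi ^ 2 - 8 by nlinarith)]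

open scoped MatrixOrder in
lemma mink3' (S : Matrix (Fin 3) (Fin 3) ℤ)
    (hS : (S.map (fun x : ℤ => (x:ℝ))).PosDef) (h2 : S.det ≤ 2) :
    ∃ z : Fin 3 → ℤ, z ≠ 0 ∧ z ⬝ᵥ (S *ᵥ z) = 1 := by
  obtain ⟨T, hT⟩ := CStarAlgebra.nonneg_iff_eq_star_mul_self.mp hS.posSemidef.nonneg
  have hdet : (S.det : ℝ) = T.det ^ 2 := by
    have h := congrArg Matrix.det hT
    rw [star_eq_conjTranspose, conjTranspose_eq_transpose_of_trivial, det_mul, det_transpose] at h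
    rw [pow_two, ← h]
    exact Int.cast_det S
  have hpos := hS.det_pos
  have key : ∀ x : Fin 3 → ℝ, ∑ i, ((T *ᵥ x) i) ^ 2
      = x ⬝ᵥ ((S.map (fun x : ℤ => (x:ℝ))) *ᵥ x) := by
    intro x
    rw [hT, star_eq_conjTranspose, conjTranspose_eq_transpose_of_trivial, ← mulVec_mulVec,
      dotProduct_mulVec, vecMul_transpose]
    simp [dotProduct, pow_two]
  have hcast : ∀ z : Fin 3 → ℤ, ((z ⬝ᵥ (S *ᵥ z) : ℤ) : ℝ) =
      (fun j => (z j : ℝ)) ⬝ᵥ ((S.map (fun x : ℤ => (x:ℝ))) *ᵥ (fun j => (z j : ℝ))) := by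
    intro z
    simp [dotProduct, mulVec]
  have hT0 : T.det ≠ 0 := by
    intro h0
    rw [hT, star_eq_conjTranspose, conjTranspose_eq_transpose_of_trivial, det_mul, h0] at hpos
    simp at hpos
  obtain ⟨z, hz, h⟩ := mink3 T hT0 (by rw [← hdet]; exact_mod_cast h2)
  · refine ⟨z, hz, ?_⟩
    rw [key, ← hcast] at h
    have h1 : z ⬝ᵥ (S *ᵥ z) < 2 := by exact_mod_cast h
    have hz' : (fun j => (z j : ℝ)) ≠ 0 := by
      intro h0; apply hz; ext j; simpa using congrFun h0 j
    have h3 := hS.dotProduct_mulVec_pos hz'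
    simp only [star_trivial] at h3
    rw [← hcast] at h3
    have h4 : 0 < z ⬝ᵥ (S *ᵥ z) := by exact_mod_cast h3
    omega

lemma cross_identity (G : Matrix (Fin 3) (Fin 3) ℤ) (hG : Gᵀ = G) (v w : Fin 3 → ℤ) :
    G *ᵥ (crossProduct (G *ᵥ v) (G *ᵥ w)) = G.det • (crossProduct v w) := by
  have h1 : G 1 0 = G 0 1 := congrFun (congrFun hG 0) 1
  have h2 : G 2 0 = G 0 2 := congrFun (congrFun hG 0) 2
  have h3 : G 2 1 = G 1 2 := congrFun (congrFun hG 1) 2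
  ext i
  fin_cases i <;>
  · simp [mulVec, dotProduct, cross_apply, det_fin_three, Fin.sum_univ_three, h1, h2, h3]
    ring

lemma unimod (G : Matrix (Fin 3) (Fin 3) ℤ) (hG : Gᵀ = G) (hdet : G.det = 1)
    (hpos : (G.map (fun x : ℤ => (x:ℝ))).PosDef) :
    ∃ M : Matrix (Fin 3) (Fin 3) ℤ, G = Mᵀ * M := by
  have hsymm : ∀ a b : Fin 3 → ℤ, a ⬝ᵥ (G *ᵥ b) = b ⬝ᵥ (G *ᵥ a) := by
    intro a b
    rw [dotProduct_mulVec, dotProduct_comm, ← mulVec_transpose, hG]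
  obtain ⟨v, hv0, hv⟩ := mink3' G hpos (by omega)
  set u := G *ᵥ v with hu
  have hS : (G + vecMulVec u u).det = 2 := by
    have : G + vecMulVec u u = G * (1 + replicateCol Unit v * replicateRow Unit u) := by
      rw [mul_add, mul_one, ← Matrix.mul_assoc, vecMulVec_eq Unit]
      congr 2
    rw [this, det_mul, hdet, det_one_add_replicateCol_mul_replicateRow, dotProduct_comm, hv]
    norm_num
  obtain ⟨w, hw0, hw⟩ := mink3' (G + vecMulVec u u) (by
    have : (G + vecMulVec u u).map (fun x : ℤ => (x:ℝ)) = G.map (fun x : ℤ => (x:ℝ)) +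
        vecMulVec (fun i => (u i : ℝ)) (star (fun i => (u i : ℝ))) := by
      ext i j
      simp [vecMulVec_apply]
    rw [this]
    exact hpos.add_posSemidef (posSemidef_vecMulVec_self_star _)) hS.le
  have hw1 : w ⬝ᵥ (G *ᵥ w) + (u ⬝ᵥ w) ^ 2 = 1 := by
    rw [← hw, add_mulVec, dotProduct_add]
    congr 1
    simp [dotProduct, mulVec, vecMulVec_apply, Fin.sum_univ_three]
    ring
  have hwpos : 0 < w ⬝ᵥ (G *ᵥ w) := by
    have hz' : (fun j => (w j : ℝ)) ≠ 0 := by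
      intro h0; apply hw0; ext j; simpa using congrFun h0 j
    have h3 := hpos.dotProduct_mulVec_pos hz'
    have : ((w ⬝ᵥ (G *ᵥ w) : ℤ) : ℝ) =
      (fun j => (w j : ℝ)) ⬝ᵥ ((G.map (fun x : ℤ => (x:ℝ))) *ᵥ (fun j => (w j : ℝ))) := by
      simp [dotProduct, mulVec]
    simp only [star_trivial] at h3
    rw [← this] at h3
    exact_mod_cast h3
  have hww : w ⬝ᵥ (G *ᵥ w) = 1 := by nlinarith [sq_nonneg (u ⬝ᵥ w)]
  have huw : u ⬝ᵥ w = 0 := by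
    have : (u ⬝ᵥ w) ^ 2 = 0 := by linarith
    exact pow_eq_zero_iff (two_ne_zero) |>.1 this
  set z := crossProduct (G *ᵥ v) (G *ᵥ w) with hz
  have hGz : G *ᵥ z = crossProduct v w := by
    rw [hz, cross_identity G hG, hdet, one_smul]
  have hwv : w ⬝ᵥ (G *ᵥ v) = 0 := by rw [dotProduct_comm]; exact huw
  have hvw : v ⬝ᵥ (G *ᵥ w) = 0 := by rw [hsymm]; exact hwv
  have hvz : v ⬝ᵥ (G *ᵥ z) = 0 := by rw [hGz]; simp
  have hwz : w ⬝ᵥ (G *ᵥ z) = 0 := by rw [hGz]; simp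
  have hzv : z ⬝ᵥ (G *ᵥ v) = 0 := by rw [hsymm]; exact hvz
  have hzw : z ⬝ᵥ (G *ᵥ w) = 0 := by rw [hsymm]; exact hwz
  have hzz : z ⬝ᵥ (G *ᵥ z) = 1 := by
    rw [hGz, hz, cross_dot_cross, dotProduct_comm _ v, dotProduct_comm _ w, dotProduct_comm _ w,
      dotProduct_comm _ v, hww, hvw]
    rw [show v ⬝ᵥ (G *ᵥ v) = 1 from hv]
    simp
  set P : Matrix (Fin 3) (Fin 3) ℤ := Matrix.of ![v, w, z] with hP
  have hPG : P * (G * Pᵀ) = 1 := by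
    have hent : ∀ i j, (P * (G * Pᵀ)) i j = P i ⬝ᵥ (G *ᵥ P j) := by
      intro i j
      simp [Matrix.mul_apply, dotProduct, mulVec]
    ext i j
    rw [hent]
    fin_cases i <;> fin_cases j
    · exact hv
    · exact hvw
    · exact hvz
    · exact hwv
    · exact hww
    · exact hwz
    · exact hzv
    · exact hzw
    · exact hzz
  have hPG' := mul_eq_one_comm.1 hPG
  refine ⟨P * G, ?_⟩
  rw [transpose_mul, hG, ← mul_assoc (G * Pᵀ), hPG', one_mul]

lemma form_rep (n d q x A : ℤ) (hd : 0 < d) (hA : 0 < A) (hq : q = d * n - 1)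
    (hAx : A * q = x ^ 2 + d) : ∃ a b c : ℤ, n = a ^ 2 + b ^ 2 + c ^ 2 := by
  obtain ⟨M, hM⟩ := unimod !![A, x, 1; x, q, 0; 1, 0, n] (by
      ext i j; fin_cases i <;> fin_cases j <;> rfl) (by
      rw [det_fin_three]; simp; subst hq; linear_combination n * hAx) (by
      apply PosDef.of_dotProduct_mulVec_pos
      · ext i j; fin_cases i <;> fin_cases j <;> simp
      · intro y hy
        have hdR : (0:ℝ) < d := by exact_mod_cast hd
        have hAR : (0:ℝ) < A := by exact_mod_cast hA
        have hqR : (q:ℝ) = d * n - 1 := by exact_mod_cast hq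
        have hAxR : (A:ℝ) * q = x ^ 2 + d := by exact_mod_cast hAx
        have h1 : star y ⬝ᵥ ((!![A, x, 1; x, q, 0; 1, 0, n] : Matrix (Fin 3) (Fin 3) ℤ).map
            (fun x : ℤ => (x:ℝ)) *ᵥ y) = A * y 0 ^ 2 + 2 * x * y 0 * y 1 + q * y 1 ^ 2 +
              2 * y 0 * y 2 + n * y 2 ^ 2 := by
          simp [dotProduct, mulVec, Fin.sum_univ_three]
          ring
        rw [h1]
        set Q := A * y 0 ^ 2 + 2 * x * y 0 * y 1 + q * y 1 ^ 2 +
              2 * y 0 * y 2 + n * y 2 ^ 2 with hQ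
        have h2 : A * d * Q = d * (A * y 0 + x * y 1 + y 2) ^ 2 + (d * y 1 - x * y 2) ^ 2
            + A * y 2 ^ 2 := by
          rw [hQ]
          linear_combination (d * y 1 ^ 2 + y 2 ^ 2) * hAxR - A * y 2 ^ 2 * hqR
        have h3 : 0 < A * d * Q := by
          rw [h2]
          by_contra hcon
          have e1 : 0 ≤ d * (A * y 0 + x * y 1 + y 2) ^ 2 := by positivity
          have e2 : 0 ≤ (d * y 1 - x * y 2) ^ 2 := by positivity
          have e3 : 0 ≤ A * y 2 ^ 2 := by positivity
          have f3 : A * y 2 ^ 2 = 0 := by linarith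
          have f2 : (d * y 1 - x * y 2) ^ 2 = 0 := by linarith
          have f1 : d * (A * y 0 + x * y 1 + y 2) ^ 2 = 0 := by linarith
          have g2 : y 2 = 0 := by simpa [hAR.ne'] using f3
          have g1 : y 1 = 0 := by simpa [hdR.ne', g2] using f2
          have g0 : y 0 = 0 := by simpa [hdR.ne', hAR.ne', g2, g1] using f1
          apply hy
          ext i
          fin_cases i <;> assumption
        exact pos_of_mul_pos_right h3 (by positivity))
  refine ⟨M 0 2, M 1 2, M 2 2, ?_⟩
  have := congrFun (congrFun hM 2) 2
  simp [Matrix.mul_apply, Fin.sum_univ_three] at this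
  linarith

open NumberTheorySymbols in
lemma three_sq (n : ℕ) (h8 : n % 8 = 1) : ∃ a b c : ℤ, (n:ℤ) = a ^ 2 + b ^ 2 + c ^ 2 := by
  obtain ⟨k, hk⟩ : ∃ k, n = 8 * k + 1 := ⟨n / 8, by omega⟩
  have hcop : IsCoprime ((12 * k + 1 : ℕ) : ℤ) ((4 * n : ℕ) : ℤ) := by
    rw [hk]
    push_cast
    exact IsCoprime.mul_right ⟨1, -(3 * k), by ring⟩ ⟨-2, 3, by ring⟩
  obtain ⟨p, hpgt, hp, hmod⟩ := Nat.forall_exists_prime_gt_and_zmodEq (12 * k + 1) (by omega) hcop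
  have : Fact p.Prime := ⟨hp⟩
  obtain ⟨j, hj⟩ : ∃ j : ℕ, p = 12 * k + 1 + 4 * n * j := by
    have h1 := (Int.modEq_iff_dvd.1 hmod.symm)
    obtain ⟨j, hj⟩ := h1
    have hj0 : 0 ≤ j := by
      by_contra hneg
      push_cast at hj
      have : (n:ℤ) * j ≤ 0 := mul_nonpos_of_nonneg_of_nonpos (by positivity) (by omega)
      have hpz : (12 * k + 1 : ℤ) < p := by exact_mod_cast hpgt
      nlinarith
    lift j to ℕ using hj0
    refine ⟨j, ?_⟩
    zify
    push_cast at hj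
    linarith
  set d : ℕ := 8 * j + 3 with hd
  have h2p : (2 * p : ℤ) = d * n - 1 := by
    rw [hj, hd, hk]; push_cast; ring
  have hp4 : p % 4 = 1 := by rw [hj, mul_assoc]; omega
  have hdodd : Odd d := ⟨4 * j + 1, by omega⟩
  have hpodd : Odd p := Nat.odd_iff.2 (by omega)
  have hJ : J(-(d:ℤ) | p) = 1 := by
    rw [jacobiSym.neg _ hpodd, ZMod.χ₄_nat_one_mod_four hp4, one_mul,
      jacobiSym.quadratic_reciprocity_one_mod_four' hdodd hp4]
    have h1 : J(-2 | d) = 1 := by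
      rw [jacobiSym.at_neg_two hdodd, ZMod.χ₈'_nat_eq_if_mod_eight]
      have : d % 8 = 3 := by omega
      simp [this, Nat.odd_iff.1 hdodd]
    have h2 : J((-2) * (p:ℤ) | d) = 1 := by
      have : (-2) * (p:ℤ) = 1 + d * (-n) := by linarith
      rw [this, jacobiSym.mod_left, Int.add_mul_emod_self_left, ← jacobiSym.mod_left]
      exact jacobiSym.one_left d
    rw [jacobiSym.mul_left, h1, one_mul] at h2
    exact h2
  have hsq := ZMod.isSquare_of_jacobiSym_eq_one hJ
  obtain ⟨y, hy⟩ := hsq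
  obtain ⟨x0, rfl⟩ := ZMod.intCast_surjective y
  have hx0 : (p:ℤ) ∣ x0 ^ 2 + d := by
    rw [← ZMod.intCast_zmod_eq_zero_iff_dvd]
    push_cast at hy ⊢
    linear_combination -hy
  obtain ⟨x, hxodd, hx⟩ : ∃ x : ℤ, x % 2 = 1 ∧ (p:ℤ) ∣ x ^ 2 + d := by
    rcases Int.emod_two_eq_zero_or_one x0 with h | h
    · refine ⟨x0 + p, by omega, ?_⟩
      have : (x0 + p) ^ 2 + d = (x0 ^ 2 + d) + p * (2 * x0 + p) := by ring
      rw [this]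
      exact dvd_add hx0 (dvd_mul_right _ _)
    · exact ⟨x0, h, hx0⟩
  have hx2 : (2:ℤ) ∣ x ^ 2 + d := by
    obtain ⟨w, hw⟩ : ∃ w, x = 2 * w + 1 := ⟨x / 2, by omega⟩
    refine ⟨2 * w ^ 2 + 2 * w + 4 * j + 2, ?_⟩
    rw [hw, hd]; push_cast; ring
  have hcop2 : IsCoprime (2:ℤ) p := by
    rw [Int.isCoprime_iff_gcd_eq_one]
    have := Nat.coprime_two_left.2 hpodd
    exact_mod_cast this
  obtain ⟨A, hA⟩ := hcop2.mul_dvd hx2 hx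
  have hdpos : (0:ℤ) < d := by positivity
  have hppos : (0:ℤ) < p := by exact_mod_cast hp.pos
  refine form_rep n d (2 * p) x A hdpos ?_ h2p (by linarith)
  have : 0 < 2 * (p:ℤ) * A := by rw [← hA]; positivity
  exact pos_of_mul_pos_right this (by positivity)

open NumberTheorySymbols in
lemma good_prime (n : ℕ) (h8 : n % 8 = 1) (hns : ¬ IsSquare n) (N : ℕ) :
    ∃ p : ℕ, p.Prime ∧ N < p ∧ p % 4 = 3 ∧ ∃ t : ℤ, (p:ℤ) ∣ t ^ 2 + n := by
  obtain ⟨a, b, hab, hsf⟩ := Nat.sq_mul_squarefree n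
  have ha1 : a ≠ 1 := by
    rintro rfl
    exact hns ⟨b, by rw [← hab]; ring⟩
  have hnodd : Odd n := Nat.odd_iff.2 (by omega)
  have haodd : Odd a := by
    rw [← hab] at hnodd
    exact (Nat.odd_mul.1 hnodd).2
  have hbodd : Odd b := by
    rw [← hab] at hnodd
    exact Nat.Odd.of_mul_left (by simpa [pow_two] using (Nat.odd_mul.1 hnodd).1)
  have ha4 : a % 4 = 1 := by
    obtain ⟨w, hw⟩ := hbodd
    have : n = 4 * ((w ^ 2 + w) * a) + a := by rw [← hab, hw]; ring
    omega
  obtain ⟨l, hl, hla⟩ := Nat.exists_prime_and_dvd ha1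
  have : Fact l.Prime := ⟨hl⟩
  obtain ⟨a', ha'⟩ := hla
  have hcop : Nat.Coprime l a' := by
    rw [ha'] at hsf
    exact Nat.coprime_of_squarefree_mul hsf
  have hlodd : Odd l := by rw [ha'] at haodd; exact (Nat.odd_mul.1 haodd).1
  have ha'odd : Odd a' := by rw [ha'] at haodd; exact (Nat.odd_mul.1 haodd).2
  have hl2 : ringChar (ZMod l) ≠ 2 := by
    rw [ZMod.ringChar_zmod_n]
    rintro rfl
    exact absurd hlodd (by decide)
  obtain ⟨g, hg⟩ := FiniteField.exists_nonsquare hl2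
  have hg0 : g ≠ 0 := by rintro rfl; exact hg (IsSquare.zero)
  have hgl : Nat.Coprime g.val l := ZMod.val_coe_unit_coprime (Units.mk0 g hg0)
  have hcop4 : Nat.Coprime (l * a') 4 := by
    have : Nat.Coprime (l * a') (2 ^ 2) := Nat.Coprime.pow_right 2
      (Nat.coprime_two_right.2 (by rw [← ha']; exact haodd))
    simpa using this
  obtain ⟨r1, hr1l, hr1a⟩ := Nat.chineseRemainder hcop g.val 1
  obtain ⟨r, hr1, hr4⟩ := Nat.chineseRemainder hcop4 r1 3
  have hrl : r ≡ g.val [MOD l] := (hr1.of_mul_right a').trans hr1l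
  have hra : r ≡ 1 [MOD a'] := (hr1.of_mul_left l).trans hr1a
  have hrcop : Nat.Coprime r (l * a' * 4) := by
    refine Nat.Coprime.mul_right (Nat.Coprime.mul_right ?_ ?_) ?_
    · unfold Nat.Coprime; rw [hrl.gcd_eq]; exact hgl
    · unfold Nat.Coprime; rw [hra.gcd_eq]; simp
    · unfold Nat.Coprime; rw [hr4.gcd_eq]; norm_num
  have hapos : 0 < l * a' := by rw [← ha']; exact haodd.pos
  obtain ⟨p, hpgt, hp, hmod⟩ := Nat.forall_exists_prime_gt_and_modEq N (by omega) hrcop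
  have : Fact p.Prime := ⟨hp⟩
  have hpl : p ≡ g.val [MOD l] := ((hmod.of_mul_right 4).of_mul_right a').trans hrl
  have hpa : p ≡ 1 [MOD a'] := ((hmod.of_mul_right 4).of_mul_left l).trans hra
  have hp4 : p % 4 = 3 := (hmod.of_mul_left (l * a')).trans hr4
  have hpodd : Odd p := Nat.odd_iff.2 (by omega)
  refine ⟨p, hp, hpgt, hp4, ?_⟩
  have hJ : J(-(a:ℤ) | p) = 1 := by
    rw [jacobiSym.neg _ hpodd, ZMod.χ₄_nat_three_mod_four hp4,
      jacobiSym.quadratic_reciprocity_one_mod_four ha4 hpodd, ha',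
      jacobiSym.mul_right' _ hl.ne_zero ha'odd.pos.ne']
    have e1 : J((p:ℤ) | l) = -1 := by
      apply ZMod.nonsquare_iff_jacobiSym_eq_neg_one.2
      have : ((p:ℤ) : ZMod l) = g := by
        have := (ZMod.natCast_eq_natCast_iff _ _ _).2 hpl
        simpa using this
      rw [this]; exact hg
    have e2 : J((p:ℤ) | a') = 1 := by
      rw [jacobiSym.mod_left' (a₂ := 1) (by exact_mod_cast hpa), jacobiSym.one_left]
    rw [e1, e2]; norm_num
  obtain ⟨y, hy⟩ := ZMod.isSquare_of_jacobiSym_eq_one hJ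
  obtain ⟨x0, rfl⟩ := ZMod.intCast_surjective y
  refine ⟨b * x0, ?_⟩
  rw [← ZMod.intCast_zmod_eq_zero_iff_dvd, ← hab]
  push_cast at hy ⊢
  linear_combination -(b:ZMod p) ^ 2 * hy

lemma mod4 : ∀ r s t u : ZMod 4, r ^ 2 + s ^ 2 + t ^ 2 + u ^ 2 = 3 →
    2 * (s * t - r * u) + 2 * (r ^ 2 - s ^ 2 + t ^ 2 - u ^ 2) = 0 := by decide

lemma flip_class (n p : ℕ) (a b c τ : ℤ) (hn : (n:ℤ) = a ^ 2 + b ^ 2 + c ^ 2)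
    (ha : a % 2 = 1) (hb : b % 4 = 2) (hc : c % 4 = 2) (hp : p.Prime) (hp4 : p % 4 = 3)
    (hpbc : ¬ (p:ℤ) ∣ b ^ 2 + c ^ 2) (hτ : (p:ℤ) ∣ τ ^ 2 + n) :
    ∃ a b c : ℤ, (n : ℤ) = a ^ 2 + b ^ 2 + c ^ 2 ∧ 4 ∣ c := by
  have : Fact p.Prime := ⟨hp⟩
  have hpR : (0:ℝ) < p := by exact_mod_cast hp.pos
  have hpZ : (0:ℤ) < p := by exact_mod_cast hp.pos
  have hbc0 : ((b:ZMod p) ^ 2 + (c:ZMod p) ^ 2) ≠ 0 := by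
    intro h
    apply hpbc
    rw [← ZMod.intCast_zmod_eq_zero_iff_dvd]
    push_cast; exact h
  obtain ⟨e, he⟩ := ZMod.intCast_surjective ((b:ZMod p) ^ 2 + (c:ZMod p) ^ 2)⁻¹
  have h1 : (e:ZMod p) * ((b:ZMod p) ^ 2 + (c:ZMod p) ^ 2) = 1 := by
    rw [he, inv_mul_cancel₀ hbc0]
  have h2 : (τ:ZMod p) ^ 2 + ((a:ZMod p) ^ 2 + (b:ZMod p) ^ 2 + (c:ZMod p) ^ 2) = 0 := by
    rw [hn, ← ZMod.intCast_zmod_eq_zero_iff_dvd] at hτ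
    push_cast at hτ; exact hτ
  have K : (e:ZMod p) * ((a:ZMod p) ^ 2 + (τ:ZMod p) ^ 2) = -1 := by
    linear_combination (e:ZMod p) * h2 - h1
  set A : ℤ := e * (b * τ - a * c) with hA
  set B : ℤ := e * (a * b + c * τ) with hB
  obtain ⟨z, hz0, hz⟩ := mink4 !![(p:ℝ), 0, A, B; 0, p, B, -A; 0, 0, 1, 0; 0, 0, 0, 1] p hpR (by
    simp [det_succ_row_zero, Fin.sum_univ_succ, Fin.succAbove]
    ring)
  set r : ℤ := p * z 0 + A * z 2 + B * z 3 with hr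
  set s : ℤ := p * z 1 + B * z 2 - A * z 3 with hs
  set t : ℤ := z 2 with ht
  set u : ℤ := z 3 with hu
  have hlt : r ^ 2 + s ^ 2 + t ^ 2 + u ^ 2 < 2 * p := by
    simp [mulVec, dotProduct, Fin.sum_univ_four] at hz
    have : ((r ^ 2 + s ^ 2 + t ^ 2 + u ^ 2 : ℤ) : ℝ) < ((2 * p : ℤ) : ℝ) := by
      rw [hr, hs, ht, hu]
      push_cast
      convert hz using 2
      ring
    exact_mod_cast this
  have hrc : (r : ZMod p) = e * (b * τ - a * c) * t + e * (a * b + c * τ) * u := by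
    rw [hr, hA, hB]; push_cast; simp
  have hsc : (s : ZMod p) = e * (a * b + c * τ) * t - e * (b * τ - a * c) * u := by
    rw [hs, hA, hB]; push_cast; simp
  have w0 : -((a : ZMod p) * s + b * t + c * u) = τ * r := by
    rw [hrc, hsc]; linear_combination (-(b * t : ZMod p) - c * u) * K
  have w1 : (a : ZMod p) * r + b * u - c * t = τ * s := by
    rw [hrc, hsc]; linear_combination ((b * u : ZMod p) - c * t) * K
  have w2 : (b : ZMod p) * r + c * s - a * u = τ * t := by
    rw [hrc, hsc]; linear_combination ((τ * t : ZMod p) + a * u) * h1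
  have w3 : (c : ZMod p) * r + a * t - b * s = τ * u := by
    rw [hrc, hsc]; linear_combination ((τ * u : ZMod p) - a * t) * h1
  have hN0 : (p:ℤ) ∣ r ^ 2 + s ^ 2 + t ^ 2 + u ^ 2 := by
    rw [← ZMod.intCast_zmod_eq_zero_iff_dvd]
    push_cast
    rw [hrc, hsc]
    linear_combination (e * ((a:ZMod p) ^ 2 + τ ^ 2) * (t ^ 2 + u ^ 2)) * h1 + (t ^ 2 + u ^ 2) * K
  have hNpos : 0 < r ^ 2 + s ^ 2 + t ^ 2 + u ^ 2 := by
    by_contra hcon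
    have e1 := sq_nonneg r
    have e2 := sq_nonneg s
    have e3 := sq_nonneg t
    have e4 := sq_nonneg u
    have f3 : t = 0 := pow_eq_zero_iff (two_ne_zero) |>.1 (by linarith : t ^ 2 = 0)
    have f4 : u = 0 := pow_eq_zero_iff (two_ne_zero) |>.1 (by linarith : u ^ 2 = 0)
    have f1 : r = 0 := pow_eq_zero_iff (two_ne_zero) |>.1 (by linarith : r ^ 2 = 0)
    have f2 : s = 0 := pow_eq_zero_iff (two_ne_zero) |>.1 (by linarith : s ^ 2 = 0)
    rw [hr, f3, f4] at f1
    rw [hs, f3, f4] at f2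
    have g0 : z 0 = 0 := by simpa [hp.ne_zero] using f1
    have g1 : z 1 = 0 := by simpa [hp.ne_zero] using f2
    apply hz0
    ext i
    fin_cases i <;> assumption
  have hN : r ^ 2 + s ^ 2 + t ^ 2 + u ^ 2 = p := by
    obtain ⟨k, hk⟩ := hN0
    rw [hk] at hNpos hlt ⊢
    have k1 : 0 < k := pos_of_mul_pos_right hNpos hpZ.le
    have k2 : k < 2 := by nlinarith
    have : k = 1 := by omega
    rw [this, mul_one]
  clear_value r s t u A B
  obtain ⟨x1, hx1⟩ : (p:ℤ) ∣ (r^2+s^2-t^2-u^2)*a + 2*(s*t+r*u)*b + 2*(s*u-r*t)*c := by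
    rw [← ZMod.intCast_zmod_eq_zero_iff_dvd]
    push_cast
    linear_combination (r:ZMod p) * w1 - (s:ZMod p) * w0 - (t:ZMod p) * w3 + (u:ZMod p) * w2
  obtain ⟨x2, hx2⟩ : (p:ℤ) ∣ 2*(s*t-r*u)*a + (r^2-s^2+t^2-u^2)*b + 2*(t*u+r*s)*c := by
    rw [← ZMod.intCast_zmod_eq_zero_iff_dvd]
    push_cast
    linear_combination (r:ZMod p) * w2 - (t:ZMod p) * w0 - (u:ZMod p) * w1 + (s:ZMod p) * w3
  obtain ⟨x3, hx3⟩ : (p:ℤ) ∣ 2*(s*u+r*t)*a + 2*(t*u-r*s)*b + (r^2-s^2-t^2+u^2)*c := by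
    rw [← ZMod.intCast_zmod_eq_zero_iff_dvd]
    push_cast
    linear_combination (r:ZMod p) * w3 - (u:ZMod p) * w0 - (s:ZMod p) * w2 + (t:ZMod p) * w1
  refine ⟨x1, x3, x2, ?_, ?_⟩
  · have : (p:ℤ) ^ 2 * n = p ^ 2 * (x1 ^ 2 + x3 ^ 2 + x2 ^ 2) := by
      have e : (p:ℤ) ^ 2 * (x1 ^ 2 + x3 ^ 2 + x2 ^ 2) =
        (p * x1) ^ 2 + (p * x3) ^ 2 + (p * x2) ^ 2 := by ring
      rw [e, ← hx1, ← hx2, ← hx3, hn, ← hN]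
      ring
    exact mul_left_cancel₀ (by positivity) this
  · have hm : (4:ℤ) ∣ 2 * (s * t - r * u) + 2 * (r ^ 2 - s ^ 2 + t ^ 2 - u ^ 2) := by
      have := (ZMod.intCast_zmod_eq_zero_iff_dvd
        (2 * (s * t - r * u) + 2 * (r ^ 2 - s ^ 2 + t ^ 2 - u ^ 2)) 4).1 (by
          push_cast
          apply mod4
          have h := congrArg (fun x : ℤ => (x : ZMod 4)) hN
          push_cast at h
          rw [h]
          have : p = 4 * (p / 4) + 3 := by omega
          rw [this]
          push_cast
          rw [show (4 : ZMod 4) = 0 from rfl]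
          ring)
      exact_mod_cast this
    obtain ⟨α, hα⟩ : ∃ α, a = 2 * α + 1 := ⟨a / 2, by omega⟩
    obtain ⟨β, hβ⟩ : ∃ β, b = 4 * β + 2 := ⟨b / 4, by omega⟩
    obtain ⟨γ, hγ⟩ : ∃ γ, c = 4 * γ + 2 := ⟨c / 4, by omega⟩
    have h4 : (4:ℤ) ∣ p * x2 := by
      rw [← hx2]
      obtain ⟨m, hm⟩ := hm
      refine ⟨m + (s * t - r * u) * α + (r ^ 2 - s ^ 2 + t ^ 2 - u ^ 2) * β
        + (t * u + r * s) * (2 * γ + 1), ?_⟩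
      rw [hα, hβ, hγ]
      linear_combination hm
    have hc4 : IsCoprime (4:ℤ) p := by
      refine ⟨(p + 1) / 4, -1, ?_⟩
      omega
    exact hc4.dvd_of_dvd_mul_left h4

lemma reorder (n : ℕ) (h8 : n % 8 = 1) (a b c : ℤ) (h : (n:ℤ) = a ^ 2 + b ^ 2 + c ^ 2) :
    ∃ a b c : ℤ, (n:ℤ) = a ^ 2 + b ^ 2 + c ^ 2 ∧ a % 2 = 1 ∧ b % 2 = 0 ∧ c % 2 = 0 := by
  have hs : ∀ x : ℤ, (x % 2 = 0 ∧ x ^ 2 % 4 = 0) ∨ (x % 2 = 1 ∧ x ^ 2 % 4 = 1) := by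
    intro x
    rcases Int.emod_two_eq_zero_or_one x with hx | hx
    · left
      obtain ⟨w, rfl⟩ : ∃ w, x = 2 * w := ⟨x / 2, by omega⟩
      have : (2 * w) ^ 2 = 4 * w ^ 2 := by ring
      omega
    · right
      obtain ⟨w, rfl⟩ : ∃ w, x = 2 * w + 1 := ⟨x / 2, by omega⟩
      have : (2 * w + 1) ^ 2 = 4 * (w ^ 2 + w) + 1 := by ring
      omega
  rcases hs a with ⟨ha, ha'⟩ | ⟨ha, ha'⟩ <;> rcases hs b with ⟨hb, hb'⟩ | ⟨hb, hb'⟩ <;>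
    rcases hs c with ⟨hc, hc'⟩ | ⟨hc, hc'⟩ <;> first
    | (exfalso; omega)
    | exact ⟨a, b, c, h, ha, hb, hc⟩
    | exact ⟨b, a, c, by linarith, hb, ha, hc⟩
    | exact ⟨c, a, b, by linarith, hc, ha, hb⟩

theorem three_squares_with_four_dvd (n : ℕ) (hn : 0 < n) (h8 : n % 8 = 1)
    (h4 : ¬ 4 ∣ n) (hform : ¬ ∃ e m : ℕ, (n : ℤ) = 4 ^ e * (8 * m - 1)) :
    ∃ a b c : ℤ, (n : ℤ) = a ^ 2 + b ^ 2 + c ^ 2 ∧ 4 ∣ c := by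
  by_cases hsq : IsSquare n
  · obtain ⟨k, hk⟩ := hsq
    exact ⟨k, 0, 0, by rw [hk]; push_cast; ring, by simp⟩
  obtain ⟨a₀, b₀, c₀, h₀⟩ := three_sq n h8
  obtain ⟨a, b, c, h, ha, hb, hc⟩ := reorder n h8 a₀ b₀ c₀ h₀
  by_cases hb4 : (4:ℤ) ∣ b
  · exact ⟨a, c, b, by linarith, hb4⟩
  by_cases hc4 : (4:ℤ) ∣ c
  · exact ⟨a, b, c, h, hc4⟩
  obtain ⟨p, hp, hgt, hp4, t, ht⟩ := good_prime n h8 hsq n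
  refine flip_class n p a b c t h ha (by omega) (by omega) hp hp4 ?_ ht
  intro hdvd
  have hb0 : b ≠ 0 := by rintro rfl; simp at hb4
  have hpos : 0 < b ^ 2 + c ^ 2 := by positivity
  have := Int.le_of_dvd hpos hdvd
  have hgt' : (n:ℤ) < p := by exact_mod_cast hgt
  nlinarith [sq_nonneg a]
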